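/- Consider a finite two-player stochastic game. Suppose W₁ : X → ℝ is a fixed point of the zero-sum Bellman operator T₁ with coalition reward R₁ − R₂ (i.e., T₁ W₁ = W₁), and W₁₂ : X → ℝ is a fixed point of the cooperative Bellman operator T₁₂ (i.e., T₁₂ W₁₂ = W₁₂). Then the pair V = (V₁, V₂) defined by V₁ = ½(W₁₂ + W₁) and V₂ = ½(W₁₂ − W₁) is a fixed point of the HS Bellman operator: T V = V. In particular, in the two-player case the coalition-decomposition HS value function V_HS solves the generalized Bellman equations defining V_{HS*}, so V_HS = V_{HS*}. -/

import Mathlib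

open Finset

/-- The maxmin value of a two-player zero-sum game with payoff `W` to the maximizer:
`sup` over mixed strategies of the row player of the `inf` over mixed strategies of the
column player of the expected payoff. -/
noncomputable def maxmin {S T : Type*} [Fintype S] [Fintype T] (W : S → T → ℝ) : ℝ :=
  ⨆ σ : stdSimplex ℝ S, ⨅ τ : stdSimplex ℝ T,
    ∑ s : S, ∑ t : T, σ.1 s * τ.1 t * W s t

/-- The two-player Harsanyi–Shapley (Coco) value of player 1:
`HS₁(G) = ½(max_a(U₁(a)+U₂(a)) + maxmin₁(U₁−U₂))`, where player 1 maximizes. -/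
noncomputable def hs1 {A₁ A₂ : Type*} [Fintype A₁] [Fintype A₂]
    (U₁ U₂ : A₁ → A₂ → ℝ) : ℝ :=
  (1 / 2) * ((⨆ a : A₁ × A₂, (U₁ a.1 a.2 + U₂ a.1 a.2)) +
    maxmin (fun a₁ a₂ => U₁ a₁ a₂ - U₂ a₁ a₂))

/-- The two-player Harsanyi–Shapley (Coco) value of player 2:
`HS₂(G) = ½(max_a(U₁(a)+U₂(a)) + maxmin₂(U₂−U₁))`, where player 2 maximizes. -/
noncomputable def hs2 {A₁ A₂ : Type*} [Fintype A₁] [Fintype A₂]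
    (U₁ U₂ : A₁ → A₂ → ℝ) : ℝ :=
  (1 / 2) * ((⨆ a : A₁ × A₂, (U₁ a.1 a.2 + U₂ a.1 a.2)) +
    maxmin (fun a₂ a₁ => U₂ a₁ a₂ - U₁ a₁ a₂))

/-- The zero-sum Bellman operator with coalition reward `U` and maximizing player 1:
`[T₁ V](x)` is the maxmin (over `Δ(A₁) × Δ(A₂)`) of
`(a₁,a₂) ↦ Σ_y P(x,(a₁,a₂),y)(U(x,(a₁,a₂),y) + γ V(y))`. -/
noncomputable def bellmanZS1 {X A₁ A₂ : Type*} [Fintype X] [Fintype A₁] [Fintype A₂]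
    (P : X → A₁ × A₂ → X → ℝ) (γ : ℝ) (U : X → A₁ × A₂ → X → ℝ)
    (V : X → ℝ) : X → ℝ := fun x =>
  maxmin (fun a₁ a₂ => ∑ y : X, P x (a₁, a₂) y * (U x (a₁, a₂) y + γ * V y))

/-- The zero-sum Bellman operator with coalition reward `U` and maximizing player 2:
`[T₂ V](x)` is the maxmin over `Δ(A₂) × Δ(A₁)` (player 2 maximizing) of
`(a₂,a₁) ↦ Σ_y P(x,(a₁,a₂),y)(U(x,(a₁,a₂),y) + γ V(y))`. -/
noncomputable def bellmanZS2 {X A₁ A₂ : Type*} [Fintype X] [Fintype A₁] [Fintype A₂]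
    (P : X → A₁ × A₂ → X → ℝ) (γ : ℝ) (U : X → A₁ × A₂ → X → ℝ)
    (V : X → ℝ) : X → ℝ := fun x =>
  maxmin (fun a₂ a₁ => ∑ y : X, P x (a₁, a₂) y * (U x (a₁, a₂) y + γ * V y))

/-- The cooperative Bellman operator:
`[T₁₂ V](x) = max_{a∈A} Σ_y P(x,a,y)(R₁(x,a,y) + R₂(x,a,y) + γ V(y))`. -/
noncomputable def bellmanCoop {X A₁ A₂ : Type*} [Fintype X] [Fintype A₁] [Fintype A₂]
    (P : X → A₁ × A₂ → X → ℝ) (γ : ℝ) (R₁ R₂ : X → A₁ × A₂ → X → ℝ)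
    (V : X → ℝ) : X → ℝ := fun x =>
  ⨆ a : A₁ × A₂, ∑ y : X, P x a y * (R₁ x a y + R₂ x a y + γ * V y)

/-- The HS Bellman operator: `[T V](x) = HS(G_x(V))`, where `G_x(V)` is the two-player
normal-form game with utilities `U_i(x,a,V) = Σ_y P(x,a,y)(R_i(x,a,y) + γ V_i(y))`. -/
noncomputable def bellmanHS {X A₁ A₂ : Type*} [Fintype X] [Fintype A₁] [Fintype A₂]
    (P : X → A₁ × A₂ → X → ℝ) (γ : ℝ) (R₁ R₂ : X → A₁ × A₂ → X → ℝ)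
    (V : X → ℝ × ℝ) : X → ℝ × ℝ := fun x =>
  (hs1 (fun a₁ a₂ => ∑ y : X, P x (a₁, a₂) y * (R₁ x (a₁, a₂) y + γ * (V y).1))
       (fun a₁ a₂ => ∑ y : X, P x (a₁, a₂) y * (R₂ x (a₁, a₂) y + γ * (V y).2)),
   hs2 (fun a₁ a₂ => ∑ y : X, P x (a₁, a₂) y * (R₁ x (a₁, a₂) y + γ * (V y).1))
       (fun a₁ a₂ => ∑ y : X, P x (a₁, a₂) y * (R₂ x (a₁, a₂) y + γ * (V y).2)))

/-- A saddle point of a function bounded below in its second variable determines the value of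
its supremum of infima. -/
theorem ciSup_ciInf_eq_of_saddlePoint {α β : Type*} (F : α → β → ℝ) (a : α) (b : β)
    (hF : ∀ x, BddBelow (Set.range (F x))) (h : ∀ x y, F x b ≤ F a y) :
    ⨆ x, ⨅ y, F x y = F a b := by
  have : Nonempty α := ⟨a⟩
  have : Nonempty β := ⟨b⟩
  have hle : ∀ x, ⨅ y, F x y ≤ F a b := fun x => (ciInf_le (hF x) b).trans (h x b)
  refine le_antisymm (ciSup_le hle) ?_
  exact (le_ciInf (h a)).trans
    (le_ciSup (f := fun x => ⨅ y, F x y) ⟨F a b, Set.forall_mem_range.2 hle⟩ a)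

/-- The expected payoff as a bilinear form in the mixed strategies, the column player first. -/
noncomputable def expectedPayoff {S T : Type*} [Fintype S] [Fintype T] (W : S → T → ℝ) :
    (T → ℝ) →ₗ[ℝ] (S → ℝ) →ₗ[ℝ] ℝ :=
  LinearMap.mk₂ ℝ (fun τ σ => ∑ s, ∑ t, σ s * τ t * W s t)
    (fun τ τ' σ => by simp only [Pi.add_apply, mul_add, add_mul, sum_add_distrib])
    (fun c τ σ => by
      simp only [Pi.smul_apply, smul_eq_mul, mul_sum]
      exact sum_congr rfl fun _ _ => sum_congr rfl fun _ _ => by ring)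
    (fun τ σ σ' => by simp only [Pi.add_apply, add_mul, sum_add_distrib])
    (fun c τ σ => by simp only [Pi.smul_apply, smul_eq_mul, mul_sum, mul_assoc])

theorem expectedPayoff_apply {S T : Type*} [Fintype S] [Fintype T] (W : S → T → ℝ)
    (τ : T → ℝ) (σ : S → ℝ) :
    expectedPayoff W τ σ = ∑ s, ∑ t, σ s * τ t * W s t := rfl

/-- Von Neumann's minimax theorem: every finite zero-sum game has a saddle point. -/
theorem exists_isSaddlePointOn_expectedPayoff {S T : Type*} [Fintype S] [Fintype T]
    [Nonempty S] [Nonempty T] (W : S → T → ℝ) :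
    ∃ τ ∈ stdSimplex ℝ T, ∃ σ ∈ stdSimplex ℝ S,
      IsSaddlePointOn (stdSimplex ℝ T) (stdSimplex ℝ S)
        (fun τ σ => expectedPayoff W τ σ) τ σ := by
  classical
  exact Sion.exists_isSaddlePointOn
    ⟨_, single_mem_stdSimplex ℝ (Classical.arbitrary T)⟩
    (convex_stdSimplex ℝ T) (isCompact_stdSimplex ℝ T)
    (fun σ _ => ((expectedPayoff W).flip σ).continuous_of_finiteDimensional.lowerSemicontinuous
      |>.lowerSemicontinuousOn _)
    (fun σ _ => (((expectedPayoff W).flip σ).convexOn (convex_stdSimplex ℝ T)).quasiconvexOn)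
    (convex_stdSimplex ℝ S)
    ⟨_, single_mem_stdSimplex ℝ (Classical.arbitrary S)⟩ (isCompact_stdSimplex ℝ S)
    (fun τ _ => (expectedPayoff W τ).continuous_of_finiteDimensional.upperSemicontinuous
      |>.upperSemicontinuousOn _)
    (fun τ _ => ((expectedPayoff W τ).concaveOn (convex_stdSimplex ℝ S)).quasiconcaveOn)

theorem maxmin_eq_of_saddlePoint {S T : Type*} [Fintype S] [Fintype T] (W : S → T → ℝ)
    (σ₀ : stdSimplex ℝ S) (τ₀ : stdSimplex ℝ T)
    (h : ∀ (σ : stdSimplex ℝ S) (τ : stdSimplex ℝ T),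
      expectedPayoff W τ₀.1 σ.1 ≤ expectedPayoff W τ.1 σ₀.1) :
    maxmin W = expectedPayoff W τ₀.1 σ₀.1 :=
  ciSup_ciInf_eq_of_saddlePoint
    (fun (σ : stdSimplex ℝ S) (τ : stdSimplex ℝ T) => expectedPayoff W τ.1 σ.1) σ₀ τ₀
    (fun σ => (isCompact_range
      (((expectedPayoff W).flip σ.1).continuous_of_finiteDimensional.comp
        continuous_subtype_val)).bddBelow) h

theorem expectedPayoff_neg_swap {S T : Type*} [Fintype S] [Fintype T] (W : S → T → ℝ)
    (τ : T → ℝ) (σ : S → ℝ) :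
    expectedPayoff (fun t s => -W s t) σ τ = -expectedPayoff W τ σ := by
  simp only [expectedPayoff_apply, mul_neg, sum_neg_distrib]
  rw [sum_comm]
  simp only [mul_comm (τ _)]

/-- Exchanging the players of a finite zero-sum game negates its value. -/
theorem maxmin_neg_swap {S T : Type*} [Fintype S] [Fintype T] [Nonempty S] [Nonempty T]
    (W : S → T → ℝ) : maxmin (fun t s => -W s t) = -maxmin W := by
  obtain ⟨τ₀, hτ₀, σ₀, hσ₀, h⟩ := exists_isSaddlePointOn_expectedPayoff W
  rw [maxmin_eq_of_saddlePoint W ⟨σ₀, hσ₀⟩ ⟨τ₀, hτ₀⟩ fun σ τ => h τ.1 τ.2 σ.1 σ.2,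
    maxmin_eq_of_saddlePoint (fun t s => -W s t) ⟨τ₀, hτ₀⟩ ⟨σ₀, hσ₀⟩, expectedPayoff_neg_swap]
  intro τ σ
  simpa only [expectedPayoff_neg_swap, neg_le_neg_iff] using h τ.1 τ.2 σ.1 σ.2

theorem hs1_eq {A₁ A₂ : Type*} [Fintype A₁] [Fintype A₂] {U₁ U₂ : A₁ → A₂ → ℝ} {c z : ℝ}
    (hc : ⨆ a : A₁ × A₂, (U₁ a.1 a.2 + U₂ a.1 a.2) = c)
    (hz : maxmin (fun a₁ a₂ => U₁ a₁ a₂ - U₂ a₁ a₂) = z) : hs1 U₁ U₂ = (c + z) / 2 := by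
  rw [hs1, hc, hz]
  ring

theorem hs2_eq {A₁ A₂ : Type*} [Fintype A₁] [Fintype A₂] [Nonempty A₁] [Nonempty A₂]
    {U₁ U₂ : A₁ → A₂ → ℝ} {c z : ℝ}
    (hc : ⨆ a : A₁ × A₂, (U₁ a.1 a.2 + U₂ a.1 a.2) = c)
    (hz : maxmin (fun a₁ a₂ => U₁ a₁ a₂ - U₂ a₁ a₂) = z) : hs2 U₁ U₂ = (c - z) / 2 := by
  have h := maxmin_neg_swap fun a₁ a₂ => U₁ a₁ a₂ - U₂ a₁ a₂
  simp only [neg_sub] at h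
  rw [hs2, hc, h, hz]
  ring

/-- If `W₁` is a fixed point of the zero-sum Bellman operator `T₁` with coalition reward
`R₁ − R₂`, and `W₁₂` is a fixed point of the cooperative Bellman operator `T₁₂`, then
`V = (½(W₁₂ + W₁), ½(W₁₂ − W₁))` is a fixed point of the HS Bellman operator; hence in
the two-player case `V_HS` solves the generalized Bellman equations defining `V_{HS*}`. -/
theorem hs_bellman_fixed_point {X A₁ A₂ : Type*} [Fintype X] [Fintype A₁] [Fintype A₂]
    [Nonempty X] [Nonempty A₁] [Nonempty A₂]
    (P : X → A₁ × A₂ → X → ℝ)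
    (hP_nonneg : ∀ x a y, 0 ≤ P x a y) (hP_sum : ∀ x a, ∑ y : X, P x a y = 1)
    (γ : ℝ) (hγ0 : 0 ≤ γ) (hγ1 : γ < 1)
    (R₁ R₂ : X → A₁ × A₂ → X → ℝ) (W₁ W₁₂ : X → ℝ)
    (hW₁ : bellmanZS1 P γ (fun x a y => R₁ x a y - R₂ x a y) W₁ = W₁)
    (hW₁₂ : bellmanCoop P γ R₁ R₂ W₁₂ = W₁₂) :
    bellmanHS P γ R₁ R₂ (fun x => ((W₁₂ x + W₁ x) / 2, (W₁₂ x - W₁ x) / 2)) =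
      fun x => ((W₁₂ x + W₁ x) / 2, (W₁₂ x - W₁ x) / 2) := by
  funext x
  have hc : ⨆ a : A₁ × A₂,
      (∑ y, P x (a.1, a.2) y * (R₁ x (a.1, a.2) y + γ * ((W₁₂ y + W₁ y) / 2)) +
        ∑ y, P x (a.1, a.2) y * (R₂ x (a.1, a.2) y + γ * ((W₁₂ y - W₁ y) / 2))) = W₁₂ x := by
    refine Eq.trans (iSup_congr fun a => ?_) (congrFun hW₁₂ x)
    rw [← sum_add_distrib]
    exact sum_congr rfl fun y _ => by ring
  have hz : maxmin (fun a₁ a₂ =>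
      ∑ y, P x (a₁, a₂) y * (R₁ x (a₁, a₂) y + γ * ((W₁₂ y + W₁ y) / 2)) -
        ∑ y, P x (a₁, a₂) y * (R₂ x (a₁, a₂) y + γ * ((W₁₂ y - W₁ y) / 2))) = W₁ x := by
    refine Eq.trans (congrArg maxmin ?_) (congrFun hW₁ x)
    funext a₁ a₂
    rw [← sum_sub_distrib]
    exact sum_congr rfl fun y _ => by ring
  exact Prod.ext (hs1_eq hc hz) (hs2_eq hc hz)
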